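/- arXiv:1006.1548 — 4 statements merged into one kernel-verified Lean document; each statement's English description precedes it below -/
import Mathlib

section
/- Let N be a prime number and let F ∈ ℂ^{N×N} be the N-point unitary DFT matrix. Then for any row-index set R ⊆ {0,…,N−1} with |R| = P and any column-index set C ⊆ {0,…,N−1} with |C| = S, where P ≥ S, the tall submatrix F(R,C) ∈ ℂ^{P×S} has full column rank S (its S columns are linearly independent). -/
open Matrix Complex

/-- The `N`-point unitary DFT matrix: `F j k = N^{-1/2} exp(-2πi jk/N)`. -/
noncomputable def dftMatrix (N : ℕ) : Matrix (Fin N) (Fin N) ℂ :=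
  Matrix.of fun j k : Fin N =>
    (1 / Real.sqrt N : ℝ) *
      Complex.exp (-2 * Real.pi * Complex.I * (j : ℕ) * (k : ℕ) / (N : ℕ))

/-!
Selecting as many rows as columns reduces the claim to Chebotarev's theorem that, for `p` prime and
`w` a primitive `p`-th root of unity, no minor of `(w ^ (j * k))` vanishes; the argument is
Frenkel's. A vanishing minor gives a nonzero polynomial over the ring of integers of `ℚ(w)` with at
most as many monomials, all of degree less than `p`, as it has roots among the powers of `w`.
Modulo the prime `w - 1` these roots all collapse to `1`, whereas in characteristic `p` a nonzero
polynomial with `n` monomials of degree less than `p` vanishes to order less than `n` at `1`. So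
every coefficient is divisible by `w - 1`, which is impossible once `w - 1` has been divided out as
often as possible.
-/

section SparsePolynomial

open Polynomial

lemma coeff_X_mul_derivative {R : Type*} [CommSemiring R] (f : R[X]) (n : ℕ) :
    (X * derivative f).coeff n = n * f.coeff n := by
  cases n with
  | zero => simp
  | succ n => rw [coeff_X_mul, coeff_derivative, mul_comm, Nat.cast_succ]

lemma eq_zero_of_X_sub_C_pow_card_dvd {K : Type*} [CommRing K] [IsDomain K] {a : K} (ha : a ≠ 0)
    {s : Finset ℕ} (hs : Set.InjOn (Nat.cast : ℕ → K) s) {f : K[X]} (hfs : f.support ⊆ s)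
    (hdvd : (X - C a) ^ s.card ∣ f) : f = 0 := by
  induction s using Finset.induction_on generalizing f with
  | empty => exact support_eq_empty.1 (Finset.subset_empty.1 hfs)
  | insert k s hk ih =>
    rw [Finset.card_insert_of_notMem hk] at hdvd
    rw [Finset.coe_insert] at hs
    -- The operator `X * d/dX - k` kills the monomial `X ^ k` and lowers the order of vanishing
    -- at `a` by at most one.
    have hcoeff (n : ℕ) :
        (X * derivative f - C (k : K) * f).coeff n = ((n : K) - k) * f.coeff n := by
      rw [coeff_sub, coeff_X_mul_derivative, coeff_C_mul, sub_mul]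
    have hzero : X * derivative f - C (k : K) * f = 0 := by
      refine ih (hs.mono (Set.subset_insert _ _)) (fun n hn ↦ ?_) (dvd_sub ?_ ?_)
      · rw [mem_support_iff, hcoeff] at hn
        refine Finset.mem_of_mem_insert_of_ne
          (hfs (mem_support_iff.2 (right_ne_zero_of_mul hn))) ?_
        rintro rfl
        simp at hn
      · exact (pow_sub_one_dvd_derivative_of_pow_dvd hdvd).mul_left X
      · exact ((pow_dvd_pow _ s.card.le_succ).trans hdvd).mul_left _
    have hmonomial : f = monomial k (f.coeff k) := by
      ext n
      rw [coeff_monomial]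
      split_ifs with hkn
      · rw [hkn]
      by_contra hn
      have hns : n ∈ insert k s := hfs (mem_support_iff.2 hn)
      have hnk : (n : K) - k = 0 :=
        (mul_eq_zero.1 ((hcoeff n).symm.trans (by rw [hzero, coeff_zero]))).resolve_right hn
      exact hkn (hs (by simp) (by simpa using hns) (sub_eq_zero.1 hnk).symm)
    have hroot : f.eval a = 0 :=
      dvd_iff_isRoot.1 ((dvd_pow_self _ s.card.succ_ne_zero).trans hdvd)
    rw [hmonomial, eval_monomial] at hroot
    rw [hmonomial, (mul_eq_zero.1 hroot).resolve_right (pow_ne_zero k ha), monomial_zero_right]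

variable {A K : Type*} [CommRing A] [IsDomain A] [CommRing K]

lemma X_sub_C_pow_card_dvd_map (φ : A →+* K) {a : K} {t : Finset A} (ht : ∀ x ∈ t, φ x = a)
    {f : A[X]} (hroot : ∀ x ∈ t, f.IsRoot x) : (X - C a) ^ t.card ∣ f.map φ := by
  obtain rfl | hf := eq_or_ne f 0
  · simp
  have hprod : ∏ x ∈ t, (X - C x) ∣ f := by
    refine (Multiset.prod_X_sub_C_dvd_iff_le_roots hf t.val).2 ?_
    exact Finset.val_le_iff_val_subset.2 fun x hx ↦ (mem_roots hf).2 (hroot x hx)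
  have hmap : (∏ x ∈ t, (X - C x)).map φ = (X - C a) ^ t.card := by
    rw [Polynomial.map_prod]
    refine Finset.prod_eq_pow_card fun x hx ↦ ?_
    rw [Polynomial.map_sub, map_X, map_C, ht x hx]
  exact hmap ▸ Polynomial.map_dvd φ hprod

lemma eq_zero_of_isRoot_of_map_eq [WfDvdMonoid A] [IsDomain K] {φ : A →+* K} {π : A}
    (hφ : RingHom.ker φ = Ideal.span {π}) {a : K} (ha : a ≠ 0) {s : Finset ℕ}
    (hs : Set.InjOn (Nat.cast : ℕ → K) s) {t : Finset A} (ht : ∀ x ∈ t, φ x = a)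
    (hst : s.card ≤ t.card) {f : A[X]} (hfs : f.support ⊆ s) (hroot : ∀ x ∈ t, f.IsRoot x) :
    f = 0 := by
  by_contra hf
  have hker (x : A) : φ x = 0 ↔ π ∣ x := by
    rw [← RingHom.mem_ker, hφ, Ideal.mem_span_singleton]
  have hπ : ¬ IsUnit (C π) := fun h ↦
    ((isUnit_C.1 h).map φ).ne_zero ((hker π).2 dvd_rfl)
  obtain ⟨g, hfg, hg⟩ := (FiniteMultiplicity.of_not_isUnit hπ hf).exists_eq_pow_mul_and_not_dvd
  set m := multiplicity (C π) f
  rw [← C_pow] at hfg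
  have hπm : π ^ m ≠ 0 := fun h ↦ hf (by rw [hfg, h, C_0, zero_mul])
  have hgs : g.support ⊆ s := fun n hn ↦ hfs <| by
    rw [mem_support_iff] at hn ⊢
    rw [hfg, coeff_C_mul]
    exact mul_ne_zero hπm hn
  have hgroot : ∀ x ∈ t, g.IsRoot x := fun x hx ↦ by
    have h := hroot x hx
    rw [hfg, IsRoot, eval_mul, eval_C] at h
    exact (mul_eq_zero.1 h).resolve_left hπm
  have hmap : g.map φ = 0 :=
    eq_zero_of_X_sub_C_pow_card_dvd ha hs ((support_map_subset φ g).trans hgs)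
      ((pow_dvd_pow _ hst).trans (X_sub_C_pow_card_dvd_map φ ht hgroot))
  exact hg ((C_dvd_iff_dvd_coeff π g).2 fun n ↦ (hker _).1 (by rw [← coeff_map, hmap, coeff_zero]))

end SparsePolynomial

section RootsOfUnity

open Polynomial

lemma mk_span_sub_one_eq_one {R : Type*} [CommRing R] (x : R) :
    Ideal.Quotient.mk (Ideal.span {x - 1}) x = 1 :=
  Ideal.Quotient.eq.2 (Ideal.mem_span_singleton_self _)

variable {p : ℕ} {A : Type*} [CommRing A] [IsDomain A]

lemma charP_quotient_span_sub_one (hp : p.Prime) {ζ : A} (hζ : IsPrimitiveRoot ζ p)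
    (hunit : ¬ IsUnit (ζ - 1)) : CharP (A ⧸ Ideal.span {ζ - 1}) p := by
  have : Nontrivial (A ⧸ Ideal.span {ζ - 1}) :=
    Ideal.Quotient.nontrivial_iff.2 (mt Ideal.span_singleton_eq_top.1 hunit)
  have hsum := congrArg (Ideal.Quotient.mk (Ideal.span {ζ - 1})) (hζ.geom_sum_eq_zero hp.one_lt)
  rw [CharP.charP_iff_prime_eq_zero hp]
  simpa [mk_span_sub_one_eq_one] using hsum

variable [WfDvdMonoid A]

lemma card_lt_card_support_of_isRoot_of_pow_eq_one (hp : p.Prime) {ζ : A}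
    (hζ : IsPrimitiveRoot ζ p) (hprime : Prime (ζ - 1)) {f : A[X]} (hf : f ≠ 0)
    (hdeg : f.natDegree < p) {t : Finset A} (ht : ∀ x ∈ t, x ^ p = 1)
    (hroot : ∀ x ∈ t, f.IsRoot x) : t.card < f.support.card := by
  by_contra! hcard
  have : (Ideal.span {ζ - 1}).IsPrime := (Ideal.span_singleton_prime hprime.ne_zero).2 hprime
  have := charP_quotient_span_sub_one hp hζ hprime.not_isUnit
  have : NeZero p := ⟨hp.ne_zero⟩
  refine hf (eq_zero_of_isRoot_of_map_eq (Ideal.mk_ker (I := Ideal.span {ζ - 1})) one_ne_zero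
    ((CharP.natCast_injOn_Iio _ p).mono fun n hn ↦ ?_) (fun x hx ↦ ?_) hcard
    Finset.Subset.rfl hroot)
  · exact (le_natDegree_of_mem_supp n hn).trans_lt hdeg
  · obtain ⟨i, -, rfl⟩ := hζ.eq_pow_of_pow_eq_one (ht x hx)
    rw [map_pow, mk_span_sub_one_eq_one, one_pow]

variable {ι : Type*} [Fintype ι] [DecidableEq ι]

lemma det_pow_mul_ne_zero_of_prime_sub_one (hp : p.Prime) {ζ : A} (hζ : IsPrimitiveRoot ζ p)
    (hprime : Prime (ζ - 1)) (r c : ι ↪ Fin p) :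
    (Matrix.of fun i j ↦ ζ ^ ((r i : ℕ) * c j)).det ≠ 0 := by
  classical
  intro hdet
  obtain ⟨v, hv, hmul⟩ := Matrix.exists_mulVec_eq_zero_iff.2 hdet
  let f : A[X] := ∑ j, monomial (c j : ℕ) (v j)
  have hcoeff (j : ι) : f.coeff (c j) = v j := by
    simp [f, coeff_monomial, Fin.val_inj]
  have hf : f ≠ 0 := fun h ↦ hv (funext fun j ↦ by rw [← hcoeff, h, coeff_zero, Pi.zero_apply])
  have hsupp : f.support ⊆ Finset.univ.image fun j ↦ (c j : ℕ) := fun n hn ↦ by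
    rw [mem_support_iff, finsetSum_coeff] at hn
    obtain ⟨j, -, hj⟩ := Finset.exists_ne_zero_of_sum_ne_zero hn
    refine Finset.mem_image.2 ⟨j, Finset.mem_univ j, ?_⟩
    by_contra hjn
    exact hj (coeff_monomial_of_ne _ (Ne.symm hjn))
  have hdeg : f.natDegree < p := by
    obtain ⟨j, -, hj⟩ := Finset.mem_image.1 (hsupp (natDegree_mem_support_of_nonzero hf))
    exact hj ▸ (c j).isLt
  have hinj : Function.Injective fun i ↦ ζ ^ (r i : ℕ) := fun i k h ↦
    r.injective (Fin.ext (hζ.pow_inj (r i).isLt (r k).isLt h))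
  have hlt : (Finset.univ.image fun i ↦ ζ ^ (r i : ℕ)).card < f.support.card := by
    refine card_lt_card_support_of_isRoot_of_pow_eq_one hp hζ hprime hf hdeg ?_ ?_
    · simp [pow_right_comm ζ _ p, hζ.pow_eq_one]
    · refine Finset.forall_mem_image.2 fun i _ ↦ ?_
      rw [IsRoot, ← Pi.zero_apply (M := fun _ ↦ A) i, ← hmul]
      simp [f, eval_finsetSum, Matrix.mulVec, dotProduct, pow_mul, mul_comm]
  refine (hlt.trans_le (Finset.card_le_card hsupp)).not_ge ?_
  rw [Finset.card_image_of_injective _ hinj]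
  exact Finset.card_image_le

end RootsOfUnity

open IntermediateField NumberField in
theorem chebotarev_det_pow_mul_ne_zero {p : ℕ} (hp : p.Prime) {L : Type*} [Field L] [CharZero L]
    {w : L} (hw : IsPrimitiveRoot w p) {ι : Type*} [Fintype ι] [DecidableEq ι] (r c : ι ↪ Fin p) :
    (Matrix.of fun i j ↦ w ^ ((r i : ℕ) * c j)).det ≠ 0 := by
  have : Fact p.Prime := ⟨hp⟩
  have : IsCyclotomicExtension {p} ℚ ℚ⟮w⟯ :=
    (IntermediateField.isCyclotomicExtension_singleton_iff_eq_adjoin p _ _ ℚ⟮w⟯ hw).2 rfl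
  have := IsCyclotomicExtension.numberField {p} ℚ ℚ⟮w⟯
  have hgen : IsPrimitiveRoot (AdjoinSimple.gen ℚ w) p :=
    IsPrimitiveRoot.coe_submonoidClass_iff.1 hw
  let ψ : 𝓞 ℚ⟮w⟯ →+* L := (algebraMap ℚ⟮w⟯ L).comp (algebraMap (𝓞 ℚ⟮w⟯) ℚ⟮w⟯)
  have hψ : Function.Injective ψ :=
    (algebraMap ℚ⟮w⟯ L).injective.comp RingOfIntegers.coe_injective
  have hdet := det_pow_mul_ne_zero_of_prime_sub_one hp hgen.toInteger_isPrimitiveRoot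
    hgen.zeta_sub_one_prime' r c
  rw [← map_ne_zero_iff ψ hψ, RingHom.map_det] at hdet
  have hψw : ψ hgen.toInteger = w := rfl
  convert hdet using 2
  ext i j
  simp [hψw]

section DFT

variable {N : ℕ}

lemma dftMatrix_eq_smul : dftMatrix N = ((1 / Real.sqrt N : ℝ) : ℂ) •
    Matrix.of fun j k : Fin N ↦ (exp (2 * Real.pi * I / N))⁻¹ ^ ((j : ℕ) * k) := by
  ext j k
  simp only [dftMatrix, Matrix.of_apply, Matrix.smul_apply, smul_eq_mul]
  rw [← exp_neg, ← exp_nat_mul]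
  push_cast
  ring_nf

lemma det_submatrix_dftMatrix_ne_zero (hN : N.Prime) {ι : Type*} [Fintype ι] [DecidableEq ι]
    (r c : ι ↪ Fin N) : ((dftMatrix N).submatrix r c).det ≠ 0 := by
  have hscale : ((1 / Real.sqrt N : ℝ) : ℂ) ≠ 0 := by simp [hN.ne_zero]
  rw [dftMatrix_eq_smul, Matrix.submatrix_smul, Pi.smul_apply, Pi.smul_apply,
    Matrix.det_smul]
  exact mul_ne_zero (pow_ne_zero _ hscale)
    (chebotarev_det_pow_mul_ne_zero hN (isPrimitiveRoot_exp N hN.ne_zero).inv r c)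

end DFT

/-- If `N` is prime, then any tall `P × S` submatrix (with `P ≥ S`) of the `N`-point
unitary DFT matrix, obtained by keeping the rows indexed by `R` (the embedding `r`)
and the columns indexed by `C` (the embedding `c`), has full column rank `S`,
i.e. its `S` columns are linearly independent. -/
theorem dft_tall_submatrix_full_column_rank (N P S : ℕ) (hN : N.Prime) (hPS : S ≤ P)
    (r : Fin P ↪ Fin N) (c : Fin S ↪ Fin N) :
    ((dftMatrix N).submatrix r c).rank = S ∧
      LinearIndependent ℂ
        (fun j : Fin S => fun i : Fin P => dftMatrix N (r i) (c j)) := by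
  have hsquare := Matrix.linearIndependent_cols_of_det_ne_zero
    (det_submatrix_dftMatrix_ne_zero hN ((Fin.castLEEmb hPS).trans r) c)
  have hcols : LinearIndependent ℂ ((dftMatrix N).submatrix r c).col :=
    LinearIndependent.of_comp (LinearMap.funLeft ℂ ℂ (Fin.castLE hPS)) hsquare
  refine ⟨?_, hcols⟩
  rw [← Matrix.rank_transpose, LinearIndependent.rank_matrix hcols, Fintype.card_fin]
end

section
/- Let P ≥ S ≥ 1 be integers and let A, B ∈ ℂ^{P×S} both have rank S, with A ≠ B and tr(AᴴA) = tr(BᴴB). Fix a real number N > 0, and for each ρ > 0 set c = S/(ρN) and define E(ρ) = (1/S)·tr[(I_S − Aᴴ(AAᴴ + c·I_P)^{-1}B)·(I_S − Aᴴ(AAᴴ + c·I_P)^{-1}B)ᴴ] + (1/(ρN))·tr[Aᴴ(AAᴴ + c·I_P)^{-2}A]. Then E(ρ) converges as ρ → ∞ to (1/S)·‖(AᴴA)^{-1}AᴴB − I_S‖_F², this limit is strictly positive, and consequently there exists no constant C such that E(ρ) ≤ C/ρ for all ρ > 0. -/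
/-!
The estimate is `W y` with `W = Aᴴ(AAᴴ + cI)⁻¹` and `y = B h + noise`, so its error is
`(I - W B) h` minus `W` applied to the noise, and its mean square is a weighted sum of
`‖I - W B‖²` and `‖W‖²` in the Frobenius norm. The push-through identity
`W = (AᴴA + cI)⁻¹Aᴴ` exposes the inverse of a matrix that stays invertible at `c = 0`, so `W`
tends to the left inverse `(AᴴA)⁻¹Aᴴ` of `A`; the noise term vanishes and the bias term survives.
If that limiting bias were zero, then `Aᴴ(B - A) = 0`, so by Pythagoras
`‖B‖² = ‖A‖² + ‖B - A‖²`, and equal energies would force `A = B`.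
-/

open Matrix Complex Filter Topology

open scoped ComplexOrder Matrix.Norms.Frobenius

section Asymptotics

variable {K : Type*} [Field K] [LinearOrder K] [IsStrictOrderedRing K] [TopologicalSpace K]
  [OrderTopology K]

lemma not_exists_forall_le_div_of_tendsto_pos {f : K → K} {l : K}
    (hf : Tendsto f atTop (𝓝 l)) (hl : 0 < l) : ¬ ∃ C, ∀ x, 0 < x → f x ≤ C / x := by
  rintro ⟨C, hC⟩
  have hdiv : Tendsto (fun x : K => C / x) atTop (𝓝 0) := tendsto_id.const_div_atTop C
  refine hl.not_ge (le_of_tendsto_of_tendsto hf hdiv ?_)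
  filter_upwards [eventually_gt_atTop 0] using hC

lemma tendsto_one_div_mul_const_atTop_nhdsGT_zero {b : K} (hb : 0 < b) :
    Tendsto (fun x : K => 1 / (x * b)) atTop (𝓝[>] 0) := by
  simpa only [one_div, Function.comp_def, id] using
    tendsto_inv_atTop_nhdsGT_zero.comp (tendsto_id.atTop_mul_const hb)

end Asymptotics

section PushThrough

variable {m n R : Type*} [Fintype m] [Fintype n] [DecidableEq m] [DecidableEq n] [CommRing R]

lemma mul_inv_mul_add_smul_one_comm (X : Matrix n m R) (Y : Matrix m n R) (c : R)
    (hYX : IsUnit (Y * X + c • (1 : Matrix m m R)))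
    (hXY : IsUnit (X * Y + c • (1 : Matrix n n R))) :
    X * (Y * X + c • (1 : Matrix m m R))⁻¹ = (X * Y + c • (1 : Matrix n n R))⁻¹ * X := by
  rw [Matrix.isUnit_iff_isUnit_det] at hYX hXY
  have intertwine : (X * Y + c • (1 : Matrix n n R)) * X =
      X * (Y * X + c • (1 : Matrix m m R)) := by
    simp [Matrix.add_mul, Matrix.mul_add, Matrix.mul_assoc]
  rw [← nonsing_inv_mul_cancel_left _ (X * _) hXY, ← Matrix.mul_assoc _ X, intertwine,
    mul_nonsing_inv_cancel_right _ _ hYX]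

end PushThrough

variable {m n 𝕜 : Type*} [Fintype m] [Fintype n] [RCLike 𝕜]

lemma isUnit_add_smul_one_of_posSemidef [DecidableEq n] {M : Matrix n n 𝕜} (hM : M.PosSemidef)
    {c : ℝ} (hc : 0 < c) : IsUnit (M + (c : 𝕜) • (1 : Matrix n n 𝕜)) :=
  (PosDef.posSemidef_add hM (PosDef.one.smul (RCLike.ofReal_pos.mpr hc))).isUnit

section Frobenius

lemma frobenius_norm_sq_eq_sum (A : Matrix m n 𝕜) : ‖A‖ ^ 2 = ∑ i, ∑ j, RCLike.normSq (A i j) := by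
  have hsum : 0 ≤ ∑ i, ∑ j, ‖A i j‖ ^ 2 := by positivity
  simp only [frobenius_norm_def, Real.rpow_two, ← Real.sqrt_eq_rpow, Real.sq_sqrt hsum,
    RCLike.normSq_eq_def']

lemma frobenius_norm_sq_eq_re_trace_mul_conjTranspose (A : Matrix m n 𝕜) :
    ‖A‖ ^ 2 = RCLike.re (A * Aᴴ).trace := by
  simp only [frobenius_norm_sq_eq_sum, trace, diag_apply, mul_apply, conjTranspose_apply, map_sum,
    RCLike.star_def, RCLike.mul_conj, ← RCLike.ofReal_pow, RCLike.ofReal_re,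
    RCLike.normSq_eq_def']

lemma frobenius_norm_sq_eq_re_trace_conjTranspose_mul (A : Matrix m n 𝕜) :
    ‖A‖ ^ 2 = RCLike.re (Aᴴ * A).trace := by
  rw [frobenius_norm_sq_eq_re_trace_mul_conjTranspose, trace_mul_comm]

lemma frobenius_norm_add_sq_of_conjTranspose_mul_eq_zero {A D : Matrix m n 𝕜} (h : Aᴴ * D = 0) :
    ‖A + D‖ ^ 2 = ‖A‖ ^ 2 + ‖D‖ ^ 2 := by
  have h' : Dᴴ * A = 0 := by simpa using congrArg conjTranspose h
  simp only [frobenius_norm_sq_eq_re_trace_conjTranspose_mul, conjTranspose_add, Matrix.add_mul,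
    Matrix.mul_add, h, h', zero_add, add_zero, trace_add, map_add]

lemma eq_of_conjTranspose_mul_eq_of_frobenius_norm_le {A B : Matrix m n 𝕜}
    (h : Aᴴ * B = Aᴴ * A) (hBA : ‖B‖ ≤ ‖A‖) : A = B := by
  have horth : Aᴴ * (B - A) = 0 := by rw [Matrix.mul_sub, h, sub_self]
  have hpyth : ‖B‖ ^ 2 = ‖A‖ ^ 2 + ‖B - A‖ ^ 2 := by
    simpa using frobenius_norm_add_sq_of_conjTranspose_mul_eq_zero horth
  have hsq : ‖B‖ ^ 2 ≤ ‖A‖ ^ 2 := by gcongr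
  have hdiff : ‖B - A‖ ^ 2 = 0 := le_antisymm (by linarith) (sq_nonneg _)
  exact (sub_eq_zero.mp (norm_eq_zero.mp (pow_eq_zero_iff two_ne_zero |>.mp hdiff))).symm

end Frobenius

section Gram

lemma posDef_conjTranspose_mul_self_of_rank_eq_card {A : Matrix m n 𝕜}
    (hA : A.rank = Fintype.card n) : (Aᴴ * A).PosDef := by
  refine PosDef.conjTranspose_mul_self A (mulVec_injective_iff.mpr ?_)
  rw [linearIndependent_iff_card_eq_finrank_span, ← hA, rank_eq_finrank_span_cols]
  rfl

lemma eq_of_inv_conjTranspose_mul_self_mul_eq_one [DecidableEq n] {A B : Matrix m n 𝕜}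
    (hA : IsUnit (Aᴴ * A)) (hBA : ‖B‖ ≤ ‖A‖) (h : (Aᴴ * A)⁻¹ * Aᴴ * B = 1) : A = B := by
  refine eq_of_conjTranspose_mul_eq_of_frobenius_norm_le ?_ hBA
  have hdet := (isUnit_iff_isUnit_det _).mp hA
  rw [← mul_nonsing_inv_cancel_left _ (Aᴴ * B) hdet, ← Matrix.mul_assoc _ Aᴴ, h, Matrix.mul_one]

end Gram

section MMSE

variable [DecidableEq m]

/-- The linear MMSE estimator `Aᴴ(AAᴴ + cI)⁻¹` of white taps observed through the pilot matrix `A`,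
where `c` is the ratio of the noise variance to the tap variance. The inverse is genuine for
`c > 0`; otherwise it may be the junk value `0`. -/
noncomputable def mmseEstimator (A : Matrix m n 𝕜) (c : ℝ) : Matrix n m 𝕜 :=
  Aᴴ * (A * Aᴴ + (c : 𝕜) • (1 : Matrix m m 𝕜))⁻¹

lemma frobenius_norm_mmseEstimator_sq (A : Matrix m n 𝕜) (c : ℝ) :
    ‖mmseEstimator A c‖ ^ 2 = RCLike.re (Aᴴ * ((A * Aᴴ + (c : 𝕜) • (1 : Matrix m m 𝕜))⁻¹ *
      (A * Aᴴ + (c : 𝕜) • (1 : Matrix m m 𝕜))⁻¹) * A).trace := by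
  simp only [frobenius_norm_sq_eq_re_trace_mul_conjTranspose, mmseEstimator, conjTranspose_mul,
    conjTranspose_nonsing_inv, conjTranspose_add, conjTranspose_smul, conjTranspose_one,
    conjTranspose_conjTranspose, RCLike.star_def, RCLike.conj_ofReal, Matrix.mul_assoc]

variable [DecidableEq n]

lemma mmseEstimator_eq_inv_mul (A : Matrix m n 𝕜) {c : ℝ} (hc : 0 < c) :
    mmseEstimator A c = (Aᴴ * A + (c : 𝕜) • (1 : Matrix n n 𝕜))⁻¹ * Aᴴ :=
  mul_inv_mul_add_smul_one_comm Aᴴ A (c : 𝕜)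
    (isUnit_add_smul_one_of_posSemidef (posSemidef_self_mul_conjTranspose A) hc)
    (isUnit_add_smul_one_of_posSemidef (posSemidef_conjTranspose_mul_self A) hc)

lemma tendsto_mmseEstimator {A : Matrix m n 𝕜} (hA : IsUnit (Aᴴ * A)) :
    Tendsto (mmseEstimator A) (𝓝[>] 0) (𝓝 ((Aᴴ * A)⁻¹ * Aᴴ)) := by
  have hinv : ContinuousAt Inv.inv (Aᴴ * A) := by
    refine continuousAt_matrix_inv _ ?_
    rw [Ring.inverse_eq_inv']
    exact continuousAt_inv₀ ((isUnit_iff_isUnit_det _).mp hA).ne_zero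
  have hgram : Tendsto (fun c : ℝ => Aᴴ * A + (c : 𝕜) • (1 : Matrix n n 𝕜)) (𝓝[>] 0)
      (𝓝 (Aᴴ * A)) := by
    have hcont : Continuous fun c : ℝ => Aᴴ * A + (c : 𝕜) • (1 : Matrix n n 𝕜) := by fun_prop
    simpa using (hcont.tendsto 0).mono_left nhdsWithin_le_nhds
  have hmul : Continuous fun M : Matrix n n 𝕜 => M * Aᴴ := by fun_prop
  refine ((hmul.tendsto _).comp (hinv.tendsto.comp hgram)).congr' ?_
  filter_upwards [self_mem_nhdsWithin] with c hc using (mmseEstimator_eq_inv_mul A hc).symm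

/-- The conditional mean-squared error of the MMSE estimate designed for the pilot matrix `A` when
the true pilot matrix is `B`, for taps of covariance `s⁻¹I` and white noise of variance `v`
(so `c = v / s⁻¹ = s v`): a bias term plus a noise term, both written with the Frobenius norm. -/
noncomputable def conditionalMSE (A B : Matrix m n 𝕜) (s v : ℝ) : ℝ :=
  1 / s * ‖1 - mmseEstimator A (s * v) * B‖ ^ 2 + v * ‖mmseEstimator A (s * v)‖ ^ 2

lemma conditionalMSE_eq_re_trace (A B : Matrix m n 𝕜) (s v : ℝ) :
    conditionalMSE A B s v =
      1 / s * RCLike.re ((1 - mmseEstimator A (s * v) * B) *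
        (1 - mmseEstimator A (s * v) * B)ᴴ).trace +
      v * RCLike.re (Aᴴ * ((A * Aᴴ + ((s * v : ℝ) : 𝕜) • (1 : Matrix m m 𝕜))⁻¹ *
        (A * Aᴴ + ((s * v : ℝ) : 𝕜) • (1 : Matrix m m 𝕜))⁻¹) * A).trace := by
  rw [conditionalMSE, frobenius_norm_sq_eq_re_trace_mul_conjTranspose,
    frobenius_norm_mmseEstimator_sq]

lemma tendsto_conditionalMSE {A : Matrix m n 𝕜} (hA : IsUnit (Aᴴ * A)) (B : Matrix m n 𝕜)
    {s : ℝ} (hs : 0 < s) :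
    Tendsto (conditionalMSE A B s) (𝓝[>] 0) (𝓝 (1 / s * ‖(Aᴴ * A)⁻¹ * Aᴴ * B - 1‖ ^ 2)) := by
  have hratio : Tendsto (fun v : ℝ => s * v) (𝓝[>] 0) (𝓝[>] 0) := by
    refine tendsto_nhdsWithin_iff.mpr ⟨?_, ?_⟩
    · have hcont : Continuous fun v : ℝ => s * v := by fun_prop
      simpa using (hcont.tendsto 0).mono_left nhdsWithin_le_nhds
    · filter_upwards [self_mem_nhdsWithin] with v hv using mul_pos hs hv
  have hest := (tendsto_mmseEstimator hA).comp hratio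
  have hbias : Continuous fun W : Matrix n m 𝕜 => ‖1 - W * B‖ ^ 2 := by fun_prop
  have hnoise : Tendsto (fun v : ℝ => v * ‖mmseEstimator A (s * v)‖ ^ 2) (𝓝[>] 0) (𝓝 0) := by
    simpa using (tendsto_id.mono_left nhdsWithin_le_nhds).mul (hest.norm.pow 2)
  have hsum := (((hbias.tendsto _).comp hest).const_mul (1 / s)).add hnoise
  rw [add_zero, norm_sub_rev] at hsum
  exact hsum

theorem mmse_wrong_support_general {A B : Matrix m n 𝕜} (hA : A.rank = Fintype.card n)
    (hAB : A ≠ B) (htr : RCLike.re (Bᴴ * B).trace ≤ RCLike.re (Aᴴ * A).trace)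
    {s N : ℝ} (hs : 0 < s) (hN : 0 < N) :
    let E : ℝ → ℝ := fun ρ => conditionalMSE A B s (1 / (ρ * N))
    let lim : ℝ := 1 / s * ‖(Aᴴ * A)⁻¹ * Aᴴ * B - 1‖ ^ 2
    Tendsto E atTop (𝓝 lim) ∧ 0 < lim ∧ ¬ ∃ C : ℝ, ∀ ρ : ℝ, 0 < ρ → E ρ ≤ C / ρ := by
  intro E lim
  have hgram := (posDef_conjTranspose_mul_self_of_rank_eq_card hA).isUnit
  have hE : Tendsto E atTop (𝓝 lim) :=
    (tendsto_conditionalMSE hgram B hs).comp (tendsto_one_div_mul_const_atTop_nhdsGT_zero hN)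
  have hBA : ‖B‖ ≤ ‖A‖ := by
    rwa [← sq_le_sq₀ (norm_nonneg _) (norm_nonneg _),
      frobenius_norm_sq_eq_re_trace_conjTranspose_mul,
      frobenius_norm_sq_eq_re_trace_conjTranspose_mul]
  have hbias : (Aᴴ * A)⁻¹ * Aᴴ * B - 1 ≠ 0 := fun h =>
    hAB (eq_of_inv_conjTranspose_mul_self_mul_eq_one hgram hBA (sub_eq_zero.mp h))
  have hlim : 0 < lim := by positivity
  exact ⟨hE, hlim, not_exists_forall_le_div_of_tendsto_pos hE hlim⟩

end MMSE

/-- Conditional MSE of the pilot-aided MMSE channel estimate under a WRONG support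
hypothesis.  `A, B ∈ ℂ^{P×S}` both have rank `S`, `A ≠ B`, and `tr(AᴴA) = tr(BᴴB)`.
With `c = S/(ρN)` and
`E(ρ) = (1/S) tr[(I − Aᴴ(AAᴴ+cI)⁻¹B)(I − Aᴴ(AAᴴ+cI)⁻¹B)ᴴ] + (1/(ρN)) tr[Aᴴ(AAᴴ+cI)⁻²A]`,
`E(ρ)` converges as `ρ → ∞` to `(1/S)‖(AᴴA)⁻¹AᴴB − I‖_F²`, which is strictly
positive; consequently no constant `C` satisfies `E(ρ) ≤ C/ρ` for all `ρ > 0`. -/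
theorem mmse_wrong_support (P S : ℕ) (hS : 1 ≤ S) (hPS : S ≤ P)
    (A B : Matrix (Fin P) (Fin S) ℂ) (hArank : A.rank = S) (hBrank : B.rank = S)
    (hAB : A ≠ B)
    (htr : Matrix.trace (Aᴴ * A) = Matrix.trace (Bᴴ * B))
    (N : ℝ) (hN : 0 < N) :
    let E : ℝ → ℝ := fun ρ =>
      (1 / (S : ℝ)) *
          (Matrix.trace
            (((1 : Matrix (Fin S) (Fin S) ℂ) -
                Aᴴ * (A * Aᴴ + (((S : ℝ) / (ρ * N) : ℝ) : ℂ) • 1)⁻¹ * B) *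
              ((1 : Matrix (Fin S) (Fin S) ℂ) -
                Aᴴ * (A * Aᴴ + (((S : ℝ) / (ρ * N) : ℝ) : ℂ) • 1)⁻¹ * B)ᴴ)).re +
        (1 / (ρ * N)) *
          (Matrix.trace
            (Aᴴ * ((A * Aᴴ + (((S : ℝ) / (ρ * N) : ℝ) : ℂ) • 1)⁻¹ *
                (A * Aᴴ + (((S : ℝ) / (ρ * N) : ℝ) : ℂ) • 1)⁻¹) * A)).re
    let lim : ℝ :=
      (1 / (S : ℝ)) *
        ∑ i : Fin S, ∑ j : Fin S,
          Complex.normSq (((((Aᴴ * A)⁻¹ * Aᴴ * B - 1)) : Matrix (Fin S) (Fin S) ℂ) i j)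
    Tendsto E atTop (𝓝 lim) ∧ 0 < lim ∧
      ¬ ∃ C : ℝ, ∀ ρ : ℝ, 0 < ρ → E ρ ≤ C / ρ := by
  simpa only [conditionalMSE_eq_re_trace, mmseEstimator, frobenius_norm_sq_eq_sum, mul_one_div,
    RCLike.re_to_complex, RCLike.normSq_to_complex, Complex.coe_algebraMap]
    using mmse_wrong_support_general (by simpa using hArank) hAB (by rw [htr])
      (Nat.cast_pos.mpr hS : (0 : ℝ) < S) hN
end

section
/- Let N be a prime number, let 1 ≤ S ≤ L ≤ N, let P ≥ S + 1, and fix a pilot index set R ⊆ {0,…,N−1} with |R| = P. Let C₁,…,C_M enumerate all S-element subsets of {0,…,L−1} (M = binom(L,S)), and for each i let Π_i denote the orthogonal projection of ℂ^P onto the column space of F(R,C_i) and Π_i^⊥ = I_P − Π_i. Fix a true support index t ∈ {1,…,M}. Let h ∈ ℂ^S and ν ∈ ℂ^P be independent random vectors such that the real and imaginary parts of all of their entries are independent real zero-mean Gaussians, with each entry of h circularly symmetric complex Gaussian of variance 1/S (real and imaginary parts each of variance 1/(2S)) and each entry of ν circularly symmetric complex Gaussian of variance 1 (real and imaginary parts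 each of variance 1/2). For ρ > 0, set z(ρ) = F(R,C_t)·h + (ρN)^{-1/2}·ν. Then the probability of the support-detection error event {∃ i ≠ t : ‖Π_i^⊥ z(ρ)‖ < ‖Π_t^⊥ z(ρ)‖} tends to 0 as ρ → ∞. -/
open Matrix Complex MeasureTheory ProbabilityTheory Filter Topology

/-- The law of a circularly symmetric complex Gaussian scalar whose real and imaginary
parts are independent real zero-mean Gaussians, each of variance `v`. -/
noncomputable def cplxGaussian (v : NNReal) : Measure ℂ :=
  Measure.map (fun p : ℝ × ℝ => ⟨p.1, p.2⟩)
    ((gaussianReal 0 v).prod (gaussianReal 0 v))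

/-- The orthogonal projector onto the orthogonal complement of the column space of the
pilot submatrix `F(R,C)` of the unitary `N`-DFT matrix (rows `R` given by the
embedding `r`, columns `C` given by the embedding `c`); since that submatrix `B` has
full column rank this projector is `I − B(BᴴB)⁻¹Bᴴ`. -/
noncomputable def perpProj (N P S : ℕ) (r : Fin P ↪ Fin N) (c : Fin S ↪ Fin N) :
    Matrix (Fin P) (Fin P) ℂ :=
  1 - (dftMatrix N).submatrix (⇑r) (⇑c) *
      (((dftMatrix N).submatrix (⇑r) (⇑c))ᴴ * (dftMatrix N).submatrix (⇑r) (⇑c))⁻¹ *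
      ((dftMatrix N).submatrix (⇑r) (⇑c))ᴴ

/-!
The key point is Chebotarev's theorem: every square submatrix of the DFT matrix of prime order `N`
is invertible. A linear relation between its columns is a nonzero polynomial of degree below `N`
with at most as many monomials as it has roots among the `N`-th roots of unity. Scale it so that it
has a nonzero reduction to the residue field, of characteristic `N`, of a valuation ring of `ℂ`: all
`N`-th roots of unity reduce to `1`, so the reduction vanishes at `1` to an order at least its
number of monomials. The Euler operator `X d/dX - k` kills one monomial, multiplies the coefficients
of the others by nonzero scalars, and lowers the order of vanishing by at most one, so this is
impossible.

Hence the column space of a wrong hypothesis misses some pilot column of the true support, and the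
noiseless residual of that hypothesis is a nonzero linear function of `h`, which vanishes with
probability zero. The residual of the true hypothesis consists of noise only. As the noise level
tends to `0` the true residual is therefore almost surely eventually the smallest, and almost sure
eventual correctness gives convergence in probability.
-/

section SparsePolynomials

open Polynomial

variable {A : Type*} [CommRing A]

lemma coeff_X_mul_derivative_sub_C_mul (f : A[X]) (b : A) (n : ℕ) :
    (X * derivative f - C b * f).coeff n = (n - b) * f.coeff n := by
  cases n with
  | zero => simp
  | succ n =>
    rw [coeff_sub, coeff_X_mul, coeff_derivative, coeff_C_mul]
    push_cast
    ring

lemma support_X_mul_derivative_sub_natCast_mul [NoZeroDivisors A] {f : A[X]} {k : ℕ}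
    (hf : Set.InjOn (Nat.cast : ℕ → A) f.support) (hk : k ∈ f.support) :
    (X * derivative f - C (k : A) * f).support = f.support.erase k := by
  ext n
  simp only [mem_support_iff, coeff_X_mul_derivative_sub_C_mul, mul_ne_zero_iff, sub_ne_zero,
    Finset.mem_erase, and_congr_left_iff]
  exact fun hn => (hf.eq_iff (mem_support_iff.2 hn) hk).not

lemma X_sub_C_pow_dvd_X_mul_derivative_sub_C_mul {f : A[X]} {a : A} {m : ℕ}
    (h : (X - C a) ^ (m + 1) ∣ f) (b : A) : (X - C a) ^ m ∣ X * derivative f - C b * f :=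
  dvd_sub ((pow_sub_one_dvd_derivative_of_pow_dvd h).mul_left X)
    (((pow_dvd_pow _ m.le_succ).trans h).mul_left _)

lemma one_lt_card_support_of_isRoot [NoZeroDivisors A] {f : A[X]} {a : A} (hf : f ≠ 0)
    (ha : a ≠ 0) (hroot : f.IsRoot a) : 1 < f.support.card := by
  by_contra! hle
  obtain ⟨k, b, hb, rfl⟩ := card_support_eq_one.1
    (hle.antisymm (Finset.card_pos.2 (nonempty_support_iff.2 hf)))
  have : Nontrivial A := ⟨a, 0, ha⟩
  simp [hb, ha] at hroot

lemma lt_card_support_of_X_sub_C_pow_dvd [NoZeroDivisors A] {a : A} (ha : a ≠ 0) {m : ℕ}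
    {f : A[X]} (hf : f ≠ 0) (hinj : Set.InjOn (Nat.cast : ℕ → A) f.support)
    (hdvd : (X - C a) ^ m ∣ f) : m < f.support.card := by
  induction m generalizing f with
  | zero => exact Finset.card_pos.2 (nonempty_support_iff.2 hf)
  | succ m ih =>
    obtain ⟨k, hk⟩ := nonempty_support_iff.2 hf
    have hsupp := support_X_mul_derivative_sub_natCast_mul hinj hk
    have hcard : (f.support.erase k).card + 1 = f.support.card := Finset.card_erase_add_one hk
    have hroot : f.IsRoot a := dvd_iff_isRoot.1 ((dvd_pow_self _ m.succ_ne_zero).trans hdvd)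
    have hne : X * derivative f - C (k : A) * f ≠ 0 := by
      rw [← nonempty_support_iff, hsupp, ← Finset.card_pos]
      have := one_lt_card_support_of_isRoot hf ha hroot
      omega
    have hlt := ih hne (hinj.mono (by rw [hsupp]; exact mod_cast Finset.erase_subset _ _))
      (X_sub_C_pow_dvd_X_mul_derivative_sub_C_mul hdvd _)
    rw [hsupp] at hlt
    omega

lemma card_le_rootMultiplicity_map {B : Type*} [CommRing B] [IsDomain A] [IsDomain B]
    {φ : A →+* B} {f : A[X]} (hf : f.map φ ≠ 0) {s : Finset A} {b : B}
    (hs : ∀ z ∈ s, f.IsRoot z ∧ φ z = b) : s.card ≤ (f.map φ).rootMultiplicity b := by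
  classical
  have hf0 : f ≠ 0 := by
    rintro rfl
    exact hf (Polynomial.map_zero φ)
  have hroots : s.val ≤ f.roots :=
    (Multiset.le_iff_subset s.nodup).2 fun z hz => (mem_roots hf0).2 (hs z hz).1
  rw [← count_roots, Multiset.le_count_iff_replicate_le]
  calc Multiset.replicate s.card b = s.val.map φ :=
        (Multiset.eq_replicate.2 ⟨s.val.card_map φ, by simpa using fun z hz => (hs z hz).2⟩).symm
    _ ≤ f.roots.map φ := Multiset.map_le_map hroots
    _ ≤ (f.map φ).roots := map_roots_le hf

end SparsePolynomials

section Chebotarev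

open Polynomial IsLocalRing

variable {K : Type*} [Field K]

lemma exists_valuationSubring_charP_residueField [CharZero K] {p : ℕ} (hp : p.Prime) :
    ∃ B : ValuationSubring K, CharP (ResidueField B) p := by
  let Z : Subring K := (Int.castRingHom K).range
  have hunit : ¬IsUnit (p : Z) := by
    intro h
    obtain ⟨⟨_, n, rfl⟩, hn⟩ := h.exists_right_inv
    have hpn : (p : K) * (n : ℤ) = 1 := congrArg Subtype.val hn
    exact (Nat.prime_iff_prime_int.1 hp).not_isUnit (.of_mul_eq_one n (by exact_mod_cast hpn))
  obtain ⟨B, -, hB⟩ := Ideal.image_subset_nonunits_valuationSubring (Ideal.span {(p : Z)})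
    (Ideal.span_singleton_eq_top.not.2 hunit)
  have hpB : (((p : B) : B) : K) ∈ B.nonunits :=
    hB ⟨p, Ideal.mem_span_singleton_self _, by simp⟩
  refine ⟨B, (CharP.charP_iff_prime_eq_zero hp).2 ?_⟩
  rw [← map_natCast (residue B), residue_eq_zero_iff]
  exact B.coe_mem_nonunits_iff.1 hpB

lemma exists_map_subtype_eq_smul_and_map_residue_ne_zero (B : ValuationSubring K) {f : K[X]}
    (hf : f ≠ 0) : ∃ (a : K) (g : B[X]), g.map B.subtype = a • f ∧ g.map (residue B) ≠ 0 := by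
  obtain ⟨k, hk, hmax⟩ := f.support.exists_max_image (fun n => B.valuation (f.coeff n))
    (nonempty_support_iff.2 hf)
  have hk0 : f.coeff k ≠ 0 := mem_support_iff.1 hk
  have hlift : (f.coeff k)⁻¹ • f ∈ lifts B.subtype := by
    refine (lifts_iff_coeff_lifts _).2 fun n => ⟨⟨(f.coeff k)⁻¹ * f.coeff n, ?_⟩, by simp⟩
    rw [← B.valuation_le_one_iff, map_mul, map_inv₀]
    refine inv_mul_le_one_of_le₀ ?_ zero_le
    by_cases hn : n ∈ f.support
    · exact hmax n hn
    · simp [notMem_support_iff.1 hn]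
  obtain ⟨g, hg⟩ := (mem_lifts _).1 hlift
  have hgk : g.coeff k = 1 := B.subtype_injective <| by
    rw [← coeff_map, hg, coeff_smul, smul_eq_mul, inv_mul_cancel₀ hk0, map_one]
  refine ⟨_, g, hg, fun h0 => one_ne_zero (α := ResidueField B) ?_⟩
  rw [← map_one (residue B), ← hgk, ← coeff_map, h0, coeff_zero]

lemma mem_valuationSubring_of_pow_eq_one (B : ValuationSubring K) {z : K} {n : ℕ} (hn : n ≠ 0)
    (hz : z ^ n = 1) : z ∈ B := by
  rw [← B.valuation_le_one_iff, ← pow_le_one_iff hn, ← map_pow, hz, map_one]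

lemma eq_one_of_pow_char_eq_one {k : Type*} [CommRing k] [IsReduced k] {p : ℕ} [Fact p.Prime]
    [CharP k p] {z : k} (hz : z ^ p = 1) : z = 1 :=
  frobenius_inj k p (by rw [frobenius_def, frobenius_def, hz, one_pow])

theorem card_lt_card_support_of_pow_eq_one_of_isRoot [CharZero K] {p : ℕ} (hp : p.Prime)
    {f : K[X]} (hf : f ≠ 0) (hdeg : ∀ n ∈ f.support, n < p) {s : Finset K}
    (hs : ∀ z ∈ s, z ^ p = 1 ∧ f.IsRoot z) : s.card < f.support.card := by
  have : Fact p.Prime := ⟨hp⟩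
  obtain ⟨B, hB⟩ := exists_valuationSubring_charP_residueField (K := K) hp
  obtain ⟨a, g, hg, hgres⟩ := exists_map_subtype_eq_smul_and_map_residue_ne_zero B hf
  have hsupp : (g.map (residue B)).support ⊆ f.support :=
    calc (g.map (residue B)).support ⊆ g.support := support_map_subset _ _
      _ = (a • f).support := by rw [← hg, support_map_of_injective g B.subtype_injective]
      _ ⊆ f.support := support_smul a f
  have hcast : Set.InjOn (Nat.cast : ℕ → ResidueField B) (g.map (residue B)).support :=
    (CharP.natCast_injOn_Iio (ResidueField B) p).mono fun n hn => hdeg n (hsupp hn)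
  classical
  have hroots : ∀ z ∈ s.subtype (· ∈ B), g.IsRoot z ∧ residue B z = 1 := by
    intro z hz
    obtain ⟨hzp, hzf⟩ := hs z (Finset.mem_subtype.1 hz)
    refine ⟨.of_map (f := B.subtype) ?_ B.subtype_injective, eq_one_of_pow_char_eq_one (p := p) ?_⟩
    · rw [hg, IsRoot.def, eval_smul, B.subtype_apply, hzf.eq_zero, smul_zero]
    · rw [← map_pow, ← map_one (residue B)]
      exact congrArg _ (Subtype.ext hzp)
  calc s.card = (s.subtype (· ∈ B)).card := by
        rw [Finset.card_subtype, Finset.filter_true_of_mem fun z hz =>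
          mem_valuationSubring_of_pow_eq_one B hp.ne_zero (hs z hz).1]
    _ ≤ (g.map (residue B)).rootMultiplicity 1 := card_le_rootMultiplicity_map hgres hroots
    _ < (g.map (residue B)).support.card :=
        lt_card_support_of_X_sub_C_pow_dvd one_ne_zero hgres hcast (pow_rootMultiplicity_dvd _ _)
    _ ≤ f.support.card := Finset.card_le_card hsupp

theorem linearIndepOn_pow_of_pow_eq_one [CharZero K] {p : ℕ} (hp : p.Prime) {ι : Type*}
    [Fintype ι] {z : ι → K} (hz : Function.Injective z) (hzp : ∀ i, z i ^ p = 1) {T : Finset ℕ}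
    (hT : ∀ n ∈ T, n < p) (hcard : T.card ≤ Fintype.card ι) :
    LinearIndepOn K (fun n i => z i ^ n) (T : Set ℕ) := by
  refine linearIndepOn_finset_iff.2 fun x hx => ?_
  let f : K[X] := ∑ n ∈ T, monomial n (x n)
  have hcoeff (n : ℕ) : f.coeff n = if n ∈ T then x n else 0 := by
    simp [f, finsetSum_coeff, coeff_monomial]
  have hsupp : f.support ⊆ T := fun n hn => by
    by_contra hnT
    exact mem_support_iff.1 hn (by rw [hcoeff, if_neg hnT])
  have hroot (i : ι) : f.IsRoot (z i) := by
    simpa [f, eval_finsetSum] using congrFun hx i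
  have hf : f = 0 := by
    by_contra hf
    have hlt := card_lt_card_support_of_pow_eq_one_of_isRoot hp hf (fun n hn => hT n (hsupp hn))
      (s := Finset.univ.map ⟨z, hz⟩) (by simpa using fun i => ⟨hzp i, hroot i⟩)
    rw [Finset.card_map, Finset.card_univ] at hlt
    exact (hlt.trans_le ((Finset.card_le_card hsupp).trans hcard)).false
  intro n hn
  simpa [hn, hf] using (hcoeff n).symm

end Chebotarev

section ResidualProjector

variable {R m n : Type*} [CommRing R] [StarRing R] [Fintype m] [DecidableEq m] [Fintype n]
  [DecidableEq n]

/-- The projector `1 - B(BᴴB)⁻¹Bᴴ` onto the orthogonal complement of the column space of `B`, for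
`B` of full column rank. It is `perpProj` for an arbitrary matrix; when `BᴴB` is singular its
inverse is the junk value `0` and the projector degenerates to `1`. -/
noncomputable def residualProj (B : Matrix m n R) : Matrix m m R :=
  1 - B * (Bᴴ * B)⁻¹ * Bᴴ

lemma residualProj_mul_self {B : Matrix m n R} (hB : IsUnit (Bᴴ * B)) :
    residualProj B * B = 0 := by
  rw [residualProj, Matrix.sub_mul, Matrix.one_mul, Matrix.mul_assoc, Matrix.mul_assoc,
    nonsing_inv_mul _ ((isUnit_iff_isUnit_det _).1 hB), Matrix.mul_one, sub_self]

lemma mem_range_mulVec_of_residualProj_mulVec_eq_zero {B : Matrix m n R} {v : m → R}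
    (hv : residualProj B *ᵥ v = 0) : v ∈ Set.range B.mulVec := by
  refine ⟨((Bᴴ * B)⁻¹ * Bᴴ) *ᵥ v, ?_⟩
  rw [residualProj, sub_mulVec, one_mulVec, sub_eq_zero] at hv
  rw [mulVec_mulVec, ← Matrix.mul_assoc, ← hv]

open ComplexOrder in
lemma residualProj_mul_self_of_injective {𝕜 : Type*} [RCLike 𝕜] {B : Matrix m n 𝕜}
    (hB : Function.Injective B.mulVec) : residualProj B * B = 0 :=
  residualProj_mul_self (PosDef.conjTranspose_mul_self B hB).isUnit

end ResidualProjector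

section DFT

variable {N : ℕ} {m n : Type*} [Fintype m] [Fintype n]

lemma exists_isPrimitiveRoot_forall_dftMatrix_eq (hN : N ≠ 0) :
    ∃ ω : ℂ, IsPrimitiveRoot ω N ∧
      ∀ j k, dftMatrix N j k = (1 / √N : ℝ) * (ω ^ (j : ℕ)) ^ (k : ℕ) := by
  refine ⟨_, (isPrimitiveRoot_exp N hN).inv, fun j k => ?_⟩
  rw [dftMatrix, of_apply, ← exp_neg, ← exp_nat_mul, ← exp_nat_mul]
  congr 2
  ring

theorem linearIndepOn_dftMatrix_col (hN : N.Prime) (r : m ↪ Fin N) {T : Finset (Fin N)}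
    (hT : T.card ≤ Fintype.card m) :
    LinearIndepOn ℂ (fun k i => dftMatrix N (r i) k) (T : Set (Fin N)) := by
  obtain ⟨ω, hω, hdft⟩ := exists_isPrimitiveRoot_forall_dftMatrix_eq hN.ne_zero
  have hpow : LinearIndepOn ℂ (fun k i => (ω ^ (r i : ℕ)) ^ k)
      (T.map Fin.valEmbedding : Set ℕ) :=
    linearIndepOn_pow_of_pow_eq_one hN
      (fun i j hij => r.injective (Fin.ext (hω.pow_inj (r i).2 (r j).2 hij)))
      (fun i => by rw [pow_right_comm, hω.pow_eq_one, one_pow]) (by simp) (by simpa using hT)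
  have hsqrt : ((√N : ℝ) : ℂ) ≠ 0 := by simpa using hN.ne_zero
  rw [Finset.coe_map] at hpow
  refine LinearIndepOn.of_comp (((√N : ℝ) : ℂ) • LinearMap.id) ?_
  refine (linearIndepOn_congr fun k _ => ?_).1 (hpow.comp_of_image Fin.val_injective.injOn)
  funext i
  simp [hdft, hsqrt]

lemma mulVec_injective_dftMatrix_submatrix (hN : N.Prime) (r : m ↪ Fin N) (c : n ↪ Fin N)
    (h : Fintype.card n ≤ Fintype.card m) :
    Function.Injective ((dftMatrix N).submatrix r c).mulVec := by
  have hind := linearIndepOn_dftMatrix_col hN r (T := Finset.univ.map c) (by simpa using h)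
  rw [Finset.coe_map, Finset.coe_univ, Set.image_univ, linearIndepOn_range_iff c.injective] at hind
  exact mulVec_injective_iff.2 hind

lemma dftMatrix_col_notMem_range_mulVec (hN : N.Prime) (r : m ↪ Fin N) (c : n ↪ Fin N)
    (h : Fintype.card n < Fintype.card m) {k : Fin N} (hk : k ∉ Set.range c) :
    (fun i => dftMatrix N (r i) k) ∉ Set.range ((dftMatrix N).submatrix r c).mulVec := by
  have hind := linearIndepOn_dftMatrix_col hN r (T := insert k (Finset.univ.map c))
    ((Finset.card_insert_le _ _).trans (by simpa using h))
  rw [Finset.coe_insert, Finset.coe_map, Finset.coe_univ, Set.image_univ,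
    linearIndepOn_insert hk] at hind
  rw [← coe_mulVecLin, ← LinearMap.coe_range, range_mulVecLin]
  convert hind.2 using 3
  rw [← Set.range_comp]
  rfl

end DFT

section PilotProjector

variable {N P S : ℕ} (r : Fin P ↪ Fin N)

lemma perpProj_mul_submatrix_self (hN : N.Prime) (hSP : S ≤ P) (c : Fin S ↪ Fin N) :
    perpProj N P S r c * (dftMatrix N).submatrix r c = 0 :=
  residualProj_mul_self_of_injective (mulVec_injective_dftMatrix_submatrix hN r c (by simpa))

lemma perpProj_mul_submatrix_ne_zero (hN : N.Prime) (hSP : S < P) {c c' : Fin S ↪ Fin N}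
    (hc : Set.range c ≠ Set.range c') : perpProj N P S r c * (dftMatrix N).submatrix r c' ≠ 0 := by
  obtain ⟨j, hj⟩ : ∃ j, c' j ∉ Set.range c := by
    by_contra! hsub
    exact hc (Set.eq_of_subset_of_ncard_le (Set.range_subset_iff.2 hsub)
      (by simp [Set.ncard_range_of_injective, c.injective, c'.injective])).symm
  intro h0
  refine dftMatrix_col_notMem_range_mulVec hN r c (by simpa) hj
    (mem_range_mulVec_of_residualProj_mulVec_eq_zero ?_)
  exact congrArg (fun M => M.col j) h0

end PilotProjector

section ProductMeasure

lemma measure_pi_eq_zero_of_forall_slice {ι : Type*} [Fintype ι] [DecidableEq ι] {X : ι → Type*}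
    [∀ i, MeasurableSpace (X i)] {μ : ∀ i, Measure (X i)} [∀ i, SigmaFinite (μ i)]
    {A : Set (∀ i, X i)} (hA : MeasurableSet A) (i : ι)
    (h : ∀ x, μ i {y | Function.update x i y ∈ A} = 0) : Measure.pi μ A = 0 := by
  have hslice : (∫⋯∫⁻_{i}, A.indicator 1 ∂μ) = ∫⋯∫⁻_{i}, 0 ∂μ := by
    funext x
    simp only [lmarginal_singleton, Pi.zero_apply, lintegral_zero]
    exact (lintegral_indicator_one (hA.preimage (measurable_update x))).trans (h x)
  rw [← lintegral_indicator_one hA, lintegral_eq_of_lmarginal_eq {i}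
    (measurable_one.indicator hA) measurable_zero hslice, Pi.zero_def, lintegral_zero]

lemma measure_pi_hyperplane_eq_zero {ι 𝕜 : Type*} [Fintype ι] [Field 𝕜] [MeasurableSpace 𝕜]
    [MeasurableAdd₂ 𝕜] [MeasurableMul₂ 𝕜] [MeasurableSingletonClass 𝕜] {μ : ι → Measure 𝕜}
    [∀ i, SigmaFinite (μ i)] [∀ i, NullSingletonClass (μ i)] {a : ι → 𝕜} (ha : a ≠ 0) (b : 𝕜) :
    Measure.pi μ {x | a ⬝ᵥ x = b} = 0 := by
  classical
  obtain ⟨i, hi : a i ≠ 0⟩ := Function.ne_iff.1 ha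
  have hmeas : Measurable fun x : ι → 𝕜 => a ⬝ᵥ x := by
    unfold dotProduct
    fun_prop
  refine measure_pi_eq_zero_of_forall_slice (hmeas (measurableSet_singleton b)) i fun x => ?_
  refine Set.Subsingleton.measure_zero (fun y hy y' hy' => ?_) _
  have hdiff : a i * (y - y') = 0 := by
    rw [← dotProduct_single, Pi.single, ← sub_self x, Function.update_sub, dotProduct_sub,
      sub_eq_zero]
    exact hy.trans hy'.symm
  exact sub_eq_zero.1 ((mul_eq_zero.1 hdiff).resolve_left hi)

lemma tendsto_measure_zero_of_ae_eventually_notMem {α κ : Type*} [MeasurableSpace α]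
    {μ : Measure α} [IsFiniteMeasure μ] {l : Filter κ} [l.IsCountablyGenerated] {A : κ → Set α}
    (hA : ∀ k, MeasurableSet (A k)) (h : ∀ᵐ x ∂μ, ∀ᶠ k in l, x ∉ A k) :
    Tendsto (fun k => μ (A k)) l (𝓝 0) := by
  rw [← measure_empty (μ := μ)]
  refine tendsto_measure_of_ae_tendsto_indicator_of_isFiniteMeasure l .empty hA ?_
  filter_upwards [h] with x hx
  simpa using hx

end ProductMeasure

section ComplexGaussian

lemma measurable_complex_mk : Measurable fun p : ℝ × ℝ => (⟨p.1, p.2⟩ : ℂ) :=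
  measurableEquivRealProd.symm.measurable

instance isProbabilityMeasure_cplxGaussian (v : NNReal) :
    IsProbabilityMeasure (cplxGaussian v) :=
  Measure.isProbabilityMeasure_map measurable_complex_mk.aemeasurable

lemma nullSingletonClass_cplxGaussian {v : NNReal} (hv : v ≠ 0) :
    NullSingletonClass (cplxGaussian v) where
  measure_singleton z := by
    have := nullSingletonClass_gaussianReal (μ := 0) hv
    rw [cplxGaussian, Measure.map_apply measurable_complex_mk (measurableSet_singleton z)]
    refine Set.Subsingleton.measure_zero ?_ _
    exact (Set.subsingleton_singleton (a := z)).preimage measurableEquivRealProd.symm.injective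

end ComplexGaussian

section VanishingNoise

lemma ae_mulVec_ne_zero {α R m n : Type*} [MeasurableSpace α] {η : Measure α}
    [NonUnitalNonAssocSemiring R] [Fintype n] {x : α → n → R}
    (hx : ∀ a : n → R, a ≠ 0 → ∀ᵐ p ∂η, a ⬝ᵥ x p ≠ 0) {A : Matrix m n R} (hA : A ≠ 0) :
    ∀ᵐ p ∂η, A *ᵥ x p ≠ 0 := by
  obtain ⟨i, hi : A i ≠ 0⟩ := Function.ne_iff.1 hA
  filter_upwards [hx (A i) hi] with p hp h0
  exact hp (congrFun h0 i)

variable {ι κ m n o : Type*} [Fintype m] [Fintype n] [Fintype o]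

lemma sqrt_sum_normSq_eq_norm (v : m → ℂ) : √(∑ i, normSq (v i)) = ‖WithLp.toLp 2 v‖ := by
  simp [EuclideanSpace.norm_eq, Complex.sq_norm]

lemma tendsto_norm_mulVec_add_smul {l : Filter κ} {σ : κ → ℝ} (hσ : Tendsto σ l (𝓝 0))
    (Q : Matrix o m ℂ) (x y : m → ℂ) :
    Tendsto (fun k => ‖WithLp.toLp 2 (Q *ᵥ (x + σ k • y))‖) l (𝓝 ‖WithLp.toLp 2 (Q *ᵥ x)‖) := by
  have hcont : Continuous fun s : ℝ => ‖WithLp.toLp 2 (Q *ᵥ (x + s • y))‖ := by fun_prop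
  simpa [Function.comp_def] using (hcont.tendsto 0).comp hσ

theorem tendsto_measure_exists_norm_mulVec_lt [Finite ι] {B : Matrix m n ℂ} {Q₀ : Matrix o m ℂ}
    {Q : ι → Matrix o m ℂ} (hQ₀ : Q₀ * B = 0) {η : Measure ((n → ℂ) × (m → ℂ))}
    [IsFiniteMeasure η] (hQ : ∀ i, ∀ᵐ p ∂η, (Q i * B) *ᵥ p.1 ≠ 0) {l : Filter κ}
    [l.IsCountablyGenerated] {σ : κ → ℝ} (hσ : Tendsto σ l (𝓝 0)) :
    Tendsto (fun k => η {p | ∃ i, ‖WithLp.toLp 2 (Q i *ᵥ (B *ᵥ p.1 + σ k • p.2))‖ <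
      ‖WithLp.toLp 2 (Q₀ *ᵥ (B *ᵥ p.1 + σ k • p.2))‖}) l (𝓝 0) := by
  refine tendsto_measure_zero_of_ae_eventually_notMem (fun k => ?_) ?_
  · rw [Set.ofPred_exists]
    exact .iUnion fun i => measurableSet_lt (by fun_prop) (by fun_prop)
  · filter_upwards [ae_all_iff.2 hQ] with p hp
    have hlt (i : ι) : ‖WithLp.toLp 2 (Q₀ *ᵥ B *ᵥ p.1)‖ < ‖WithLp.toLp 2 (Q i *ᵥ B *ᵥ p.1)‖ := by
      simpa [mulVec_mulVec, hQ₀] using hp i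
    have hev : ∀ᶠ k in l, ∀ i, ‖WithLp.toLp 2 (Q₀ *ᵥ (B *ᵥ p.1 + σ k • p.2))‖ <
        ‖WithLp.toLp 2 (Q i *ᵥ (B *ᵥ p.1 + σ k • p.2))‖ :=
      eventually_all.2 fun i => (tendsto_norm_mulVec_add_smul hσ Q₀ _ p.2).eventually_lt
        (tendsto_norm_mulVec_add_smul hσ (Q i) _ p.2) (hlt i)
    filter_upwards [hev] with k hk
    rintro ⟨i, hi⟩
    exact lt_asymm hi (hk i)

end VanishingNoise

section PASE

variable {N P S : ℕ}

theorem pase_error_vanishes_general {κ : Type*} (hN : N.Prime) (hSP : S < P)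
    (r : Fin P ↪ Fin N) (ct : Fin S ↪ Fin N) {η : Measure ((Fin S → ℂ) × (Fin P → ℂ))}
    [IsFiniteMeasure η] (hη : ∀ a : Fin S → ℂ, a ≠ 0 → ∀ᵐ p ∂η, a ⬝ᵥ p.1 ≠ 0)
    {l : Filter κ} [l.IsCountablyGenerated] {σ : κ → ℝ} (hσ : Tendsto σ l (𝓝 0)) :
    Tendsto
      (fun k => η {p | ∃ c : Fin S ↪ Fin N, Set.range c ≠ Set.range ct ∧
        √(∑ i, normSq ((perpProj N P S r c *ᵥ
          ((dftMatrix N).submatrix r ct *ᵥ p.1 + σ k • p.2)) i)) <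
        √(∑ i, normSq ((perpProj N P S r ct *ᵥ
          ((dftMatrix N).submatrix r ct *ᵥ p.1 + σ k • p.2)) i))})
      l (𝓝 0) := by
  simp only [sqrt_sum_normSq_eq_norm]
  have hmain := tendsto_measure_exists_norm_mulVec_lt
    (ι := {c : Fin S ↪ Fin N // Set.range c ≠ Set.range ct}) (Q := fun c => perpProj N P S r c)
    (perpProj_mul_submatrix_self r hN hSP.le ct)
    (fun c => ae_mulVec_ne_zero hη (perpProj_mul_submatrix_ne_zero r hN hSP c.2)) hσ
  simpa using hmain

lemma tendsto_inv_sqrt_mul_atTop_nhds_zero {a : ℝ} (ha : 0 < a) :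
    Tendsto (fun x => (√(x * a))⁻¹) atTop (𝓝 0) :=
  tendsto_inv_atTop_zero.comp (Real.tendsto_sqrt_atTop.comp (tendsto_id.atTop_mul_const ha))

lemma ae_dotProduct_ne_zero_of_cplxGaussian {n : Type*} [Fintype n] {v : NNReal} (hv : v ≠ 0)
    {a : n → ℂ} (ha : a ≠ 0) : ∀ᵐ x ∂Measure.pi fun _ => cplxGaussian v, a ⬝ᵥ x ≠ 0 := by
  have := nullSingletonClass_cplxGaussian hv
  simpa [ae_iff] using measure_pi_hyperplane_eq_zero ha 0

end PASE

/-- **Asymptotic reliability of pilot-aided support estimation (PASE).**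
Let `N` be prime, `1 ≤ S ≤ L ≤ N`, `P ≥ S + 1` pilots at rows `R` (embedding `r`),
and let the true support `C_t ⊆ {0,…,L−1}` be given by the embedding `ct`.  Let
`h ∈ ℂ^S` and `ν ∈ ℂ^P` be independent, with i.i.d. circularly symmetric complex
Gaussian entries of variance `1/S` and `1` respectively (so their joint law is the
product measure below), and let `z(ρ) = F(R,C_t)h + (ρN)^{−1/2}ν`.  Then the
probability that some wrong support hypothesis (a size-`S` subset of `{0,…,L−1}`
distinct from `C_t`) yields a strictly smaller projection-error energy
`‖Π_i^⊥ z(ρ)‖ < ‖Π_t^⊥ z(ρ)‖` tends to `0` as `ρ → ∞`. -/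
theorem pase_error_vanishes (N L S P : ℕ) (hN : N.Prime) (hS : 1 ≤ S)
    (hSL : S ≤ L) (hLN : L ≤ N) (hP : S + 1 ≤ P)
    (r : Fin P ↪ Fin N) (ct : Fin S ↪ Fin N) (hct : ∀ j, (ct j : ℕ) < L) :
    Tendsto
      (fun ρ : ℝ =>
        ((Measure.pi fun _ : Fin S => cplxGaussian (1 / (2 * S))).prod
            (Measure.pi fun _ : Fin P => cplxGaussian (1 / 2)))
          {p : (Fin S → ℂ) × (Fin P → ℂ) |
            ∃ c : Fin S ↪ Fin N,
              (∀ j, (c j : ℕ) < L) ∧ Set.range (⇑c) ≠ Set.range (⇑ct) ∧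
                Real.sqrt (∑ i : Fin P,
                    Complex.normSq
                      ((perpProj N P S r c).mulVec
                        (((dftMatrix N).submatrix (⇑r) (⇑ct)).mulVec p.1 +
                          (Real.sqrt (ρ * N))⁻¹ • p.2) i)) <
                  Real.sqrt (∑ i : Fin P,
                    Complex.normSq
                      ((perpProj N P S r ct).mulVec
                        (((dftMatrix N).submatrix (⇑r) (⇑ct)).mulVec p.1 +
                          (Real.sqrt (ρ * N))⁻¹ • p.2) i))})
      atTop (𝓝 0) := by
  have hN0 : (0 : ℝ) < N := mod_cast hN.pos
  have hv : (1 / (2 * S) : NNReal) ≠ 0 := by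
    have : (S : NNReal) ≠ 0 := Nat.cast_ne_zero.2 (Nat.one_le_iff_ne_zero.1 hS)
    positivity
  refine tendsto_of_tendsto_of_tendsto_of_le_of_le tendsto_const_nhds
    (pase_error_vanishes_general hN hP r ct (fun a ha =>
      Measure.quasiMeasurePreserving_fst.ae (ae_dotProduct_ne_zero_of_cplxGaussian hv ha))
      (tendsto_inv_sqrt_mul_atTop_nhds_zero hN0)) (fun _ => zero_le) fun ρ => measure_mono ?_
  rintro p ⟨c, -, hc⟩
  exact ⟨c, hc⟩
end

section
/- Let P, S, M ≥ 1 be integers, let A ∈ ℂ^{P×S}, and for each i ∈ {1,…,M} let Π_i be the orthogonal projection of ℂ^P onto a linear subspace V_i ⊆ ℂ^P, with Π_i^⊥ = I_P − Π_i. Fix t ∈ {1,…,M} and assume the column space of A is contained in V_t (so Π_t^⊥ A = 0). Let h ∈ ℂ^S and ν ∈ ℂ^P be random vectors on a common probability space (with arbitrary joint distribution), let c > 0, and set z = A·h + c·ν. Then Pr{∃ i ≠ t : ‖Π_i^⊥ z‖ < ‖Π_t^⊥ z‖} ≤ Σ_{i ≠ t} Pr{‖Π_i^⊥ A h‖ <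 2c·‖ν‖}. -/
open Matrix Complex MeasureTheory

/-!
Complementary projections are contractions, so the noise moves each residual norm by at most `c‖ν‖`,
and the residual of the true hypothesis consists of noise only. A wrong hypothesis can therefore win
only when its noiseless residual is smaller than `2c‖ν‖`.
-/

theorem norm_lt_two_mul_of_norm_add_lt {E F : Type*} [SeminormedAddGroup E] [Norm F]
    {x u : E} {v : F} {r : ℝ} (hu : ‖u‖ ≤ r) (hv : ‖v‖ ≤ r) (hlt : ‖x + u‖ < ‖v‖) :
    ‖x‖ < 2 * r := by
  linarith [norm_le_add_norm_add x u]

theorem norm_toEuclideanCLM_one_sub_le_one {𝕜 n : Type*} [RCLike 𝕜] [Fintype n] [DecidableEq n]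
    {Q : Matrix n n 𝕜} (hQ : IsStarProjection Q) :
    ‖toEuclideanCLM (n := n) (𝕜 := 𝕜) (1 - Q)‖ ≤ 1 :=
  (hQ.one_sub.map toEuclideanCLM).norm_le

theorem toEuclideanCLM_toLp_mulVec_eq_zero {𝕜 m n : Type*} [RCLike 𝕜] [Fintype m] [DecidableEq m]
    [Fintype n] {Q : Matrix m m 𝕜} {A : Matrix m n 𝕜} (hQA : Q * A = 0) (x : n → 𝕜) :
    toEuclideanCLM (𝕜 := 𝕜) Q (WithLp.toLp 2 (A *ᵥ x)) = 0 := by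
  rw [toEuclideanCLM_toLp, mulVec_mulVec, hQA, zero_mulVec, WithLp.toLp_zero]

theorem sqrt_sum_normSq_eq_norm_toLp {n : Type*} [Fintype n] (v : n → ℂ) :
    √(∑ l, normSq (v l)) = ‖WithLp.toLp 2 v‖ := by
  simp only [EuclideanSpace.norm_eq, normSq_eq_norm_sq]

section ResidualComparison

variable {𝕜 E F : Type*} [NontriviallyNormedField 𝕜] [SeminormedAddCommGroup E]
  [NormedSpace 𝕜 E] [SeminormedAddCommGroup F] [NormedSpace 𝕜 F]

theorem norm_map_lt_of_norm_map_add_smul_lt {R T : E →L[𝕜] F} (hR : ‖R‖ ≤ 1) (hT : ‖T‖ ≤ 1)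
    {x n : E} {c : 𝕜} (hx : T x = 0) (hlt : ‖R (x + c • n)‖ < ‖T (x + c • n)‖) :
    ‖R x‖ < 2 * ‖c‖ * ‖n‖ := by
  rw [map_add, map_add, hx, zero_add] at hlt
  have hRn : ‖R (c • n)‖ ≤ ‖c • n‖ := (R.le_of_opNorm_le hR _).trans_eq (one_mul _)
  have hTn : ‖T (c • n)‖ ≤ ‖c • n‖ := (T.le_of_opNorm_le hT _).trans_eq (one_mul _)
  simpa only [norm_smul, mul_assoc] using norm_lt_two_mul_of_norm_add_lt hRn hTn hlt

theorem pase_union_bound_general {ι Ω : Type*} [MeasurableSpace Ω] (μ : Measure Ω)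
    {R : ι → E →L[𝕜] F} (hR : ∀ i, ‖R i‖ ≤ 1) {I : Set ι} (hI : I.Countable) (t : ι)
    {s ν : Ω → E} (hs : ∀ ω, R t (s ω) = 0) (c : 𝕜) :
    μ {ω | ∃ i ∈ I, ‖R i (s ω + c • ν ω)‖ < ‖R t (s ω + c • ν ω)‖} ≤
      ∑' i : I, μ {ω | ‖R i (s ω)‖ < 2 * ‖c‖ * ‖ν ω‖} :=
  calc
    _ ≤ μ (⋃ i ∈ I, {ω | ‖R i (s ω)‖ < 2 * ‖c‖ * ‖ν ω‖}) := by
      refine measure_mono ?_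
      rintro ω ⟨i, hi, hlt⟩
      exact Set.mem_biUnion hi (norm_map_lt_of_norm_map_add_smul_lt (hR i) (hR t) (hs ω) hlt)
    _ ≤ _ := measure_biUnion_le μ hI _

end ResidualComparison

/-- **Union-bound reduction for the projection-based support estimator.**
Let `Pm i` (for `i ∈ {1,…,M}`) be orthogonal projections of `ℂ^P` onto subspaces
(i.e. Hermitian idempotent matrices), let `t` be such that the column space of
`A ∈ ℂ^{P×S}` is contained in the range of `Pm t` (so `(I − Pm t)A = 0`), let
`h`, `ν` be random vectors on a common probability space with arbitrary joint
distribution, let `c > 0`, and set `z = A h + c ν`.  Then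
`Pr{∃ i ≠ t : ‖(I − Pm i) z‖ < ‖(I − Pm t) z‖} ≤ ∑_{i ≠ t} Pr{‖(I − Pm i) A h‖ < 2c‖ν‖}`. -/
theorem pase_union_bound (P S M : ℕ) (hP : 1 ≤ P) (hS : 1 ≤ S) (hM : 1 ≤ M)
    (A : Matrix (Fin P) (Fin S) ℂ) (Pm : Fin M → Matrix (Fin P) (Fin P) ℂ)
    (hHerm : ∀ i, (Pm i)ᴴ = Pm i) (hIdem : ∀ i, Pm i * Pm i = Pm i)
    (t : Fin M) (hA : ((1 : Matrix (Fin P) (Fin P) ℂ) - Pm t) * A = 0)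
    (Ω : Type*) [MeasureSpace Ω] [IsProbabilityMeasure (volume : Measure Ω)]
    (h : Ω → Fin S → ℂ) (ν : Ω → Fin P → ℂ) (hh : Measurable h) (hν : Measurable ν)
    (c : ℝ) (hc : 0 < c) :
    volume
        {ω : Ω |
          ∃ i, i ≠ t ∧
            Real.sqrt (∑ l : Fin P,
                Complex.normSq
                  ((((1 : Matrix (Fin P) (Fin P) ℂ) - Pm i).mulVec
                    (A.mulVec (h ω) + ((c : ℝ) : ℂ) • ν ω)) l)) <
              Real.sqrt (∑ l : Fin P,
                Complex.normSq
                  ((((1 : Matrix (Fin P) (Fin P) ℂ) - Pm t).mulVec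
                    (A.mulVec (h ω) + ((c : ℝ) : ℂ) • ν ω)) l))} ≤
      ∑ i ∈ Finset.univ.erase t,
        volume
          {ω : Ω |
            Real.sqrt (∑ l : Fin P,
                Complex.normSq
                  ((((1 : Matrix (Fin P) (Fin P) ℂ) - Pm i).mulVec
                    (A.mulVec (h ω))) l)) <
              2 * c * Real.sqrt (∑ l : Fin P, Complex.normSq (ν ω l))} := by
  rw [← Finset.tsum_subtype']
  simpa only [sqrt_sum_normSq_eq_norm_toLp, ← toEuclideanCLM_toLp, WithLp.toLp_add,
    WithLp.toLp_smul, norm_real, Real.norm_of_nonneg hc.le, Finset.mem_coe, Finset.mem_erase,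
    Finset.mem_univ, and_true] using
    pase_union_bound_general volume (fun i ↦ norm_toEuclideanCLM_one_sub_le_one ⟨hIdem i, hHerm i⟩)
      (Finset.univ.erase t).countable_toSet t (fun ω ↦ toEuclideanCLM_toLp_mulVec_eq_zero hA (h ω))
      (ν := fun ω ↦ WithLp.toLp 2 (ν ω)) (c : ℂ)
end
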